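/- Let k ≥ 2, n ≥ k+1, n > 5, and suppose L_n^{(k)} = a·(10^{d1}−1)/9 + (b−a)·10^{d2} with integers 0 ≤ d2 < d1, d1 ≥ 3, 1 ≤ a ≤ 9 and 0 ≤ b ≤ 9. Then |α^{−(n−1)}·10^{d1}·f_k(α)^{−1}·(2α−1)^{−1}·((a/9) + (b−a)·10^{d2−d1}) − 1| ≤ 5/(2·α^{n−1}), where α is the dominant root of Ψ_k and f_k(x) = (x−1)/(2 + (k+1)(x−2)). -/

import Mathlib

/-- Shifted `k`-generalized Lucas sequence: `genLucas k m` equals `L^{(k)}_{m - (k-2)}`,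
so that index `m = 0` corresponds to `n = 2 - k`.  The initial values are
`L^{(k)}_{2-k} = ⋯ = L^{(k)}_{-1} = 0`, `L^{(k)}_0 = 2`, `L^{(k)}_1 = 1`, and each term
afterwards is the sum of the `k` preceding terms. -/
def genLucas (k : ℕ) : ℕ → ℤ := fun m =>
  if h1 : m < k - 2 then 0
  else if h2 : m = k - 2 then 2
  else if h3 : m = k - 1 then 1
  else ∑ i ∈ Finset.range k, genLucas k (m - 1 - i)
decreasing_by omega

/-- The `k`-generalized Lucas number `L^{(k)}_n` for `n ≥ 0`. -/
def lucasL (k n : ℕ) : ℤ := genLucas k (n + k - 2)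

lemma genLucas_rec (k m : ℕ) (hk : 2 ≤ k) :
    genLucas k (m + k) = ∑ i ∈ Finset.range k, genLucas k (m + i) := by
  rw [genLucas, dif_neg (by omega), dif_neg (by omega), dif_neg (by omega),
    ← Finset.sum_range_reflect]
  refine Finset.sum_congr rfl fun i hi => ?_
  rw [Finset.mem_range] at hi
  congr 1
  omega

lemma genLucas_zero (k m : ℕ) (h : m < k - 2) : genLucas k m = 0 := by
  rw [genLucas, dif_pos h]

lemma genLucas_two (k : ℕ) : genLucas k (k - 2) = 2 := by
  rw [genLucas, dif_neg (by omega), dif_pos rfl]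

lemma genLucas_one (k : ℕ) (hk : 2 ≤ k) : genLucas k (k - 1) = 1 := by
  rw [genLucas, dif_neg (by omega), dif_neg (by omega), dif_pos rfl]

/-- A solution of the recurrence without dominant component is an average of the previous
`k` values. -/
lemma conv_step (k : ℕ) (α : ℝ) (hα : 1 < α) (hb : (2 - α) * α ^ k = 1)
    (e : ℕ → ℝ) (hrec : ∀ m, e (m + k + 1) = 2 * e (m + k) - e m)
    (h0 : e k = ∑ i ∈ Finset.range k, (α⁻¹) ^ (i + 1) * e i) (m : ℕ) :
    e (m + k) = ∑ i ∈ Finset.range k, (α⁻¹) ^ (i + 1) * e (m + i) := by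
  have hα0 : α ≠ 0 := by positivity
  induction m with
  | zero => simpa using h0
  | succ m ih =>
    have h1 : ∑ i ∈ Finset.range k, (α⁻¹) ^ (i + 1) * e (m + 1 + i)
        = α * ∑ i ∈ Finset.range k, (α⁻¹) ^ (i + 1 + 1) * e (m + (i + 1)) := by
      rw [Finset.mul_sum]
      refine Finset.sum_congr rfl fun i _ => ?_
      rw [show m + 1 + i = m + (i + 1) by ring, pow_succ _ (i + 1)]
      field_simp
    have h2 := Finset.sum_range_succ (fun i => (α⁻¹) ^ (i + 1) * e (m + i)) k
    rw [Finset.sum_range_succ'] at h2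
    have h3 : (α⁻¹) ^ k = 2 - α := by
      rw [inv_pow]; exact (eq_inv_of_mul_eq_one_left hb).symm
    rw [← ih, pow_succ _ k, h3] at h2
    rw [h1, eq_sub_of_add_eq h2, show m + 1 + k = m + k + 1 by ring, hrec]
    simp only [zero_add, pow_one, add_zero]
    field_simp
    ring

lemma conv_bound (k : ℕ) (α B : ℝ) (hα : 1 < α)
    (hw : ∑ i ∈ Finset.range k, (α⁻¹) ^ (i + 1) = 1)
    (e : ℕ → ℝ) (h : ∀ m, e (m + k) = ∑ i ∈ Finset.range k, (α⁻¹) ^ (i + 1) * e (m + i))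
    (hB : ∀ m < k, |e m| ≤ B) (m : ℕ) : |e m| ≤ B := by
  induction m using Nat.strong_induction_on with
  | _ m ih =>
    rcases lt_or_ge m k with hm | hm
    · exact hB m hm
    · obtain ⟨j, rfl⟩ := Nat.exists_eq_add_of_le' hm
      rw [h]
      calc _ ≤ ∑ i ∈ Finset.range k, |(α⁻¹) ^ (i + 1) * e (j + i)| :=
            Finset.abs_sum_le_sum_abs _ _
        _ ≤ ∑ i ∈ Finset.range k, (α⁻¹) ^ (i + 1) * B := by
            refine Finset.sum_le_sum fun i hi => ?_
            rw [Finset.mem_range] at hi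
            rw [abs_mul, abs_of_pos (by positivity)]
            exact mul_le_mul_of_nonneg_left (ih _ (by omega)) (by positivity)
        _ = B := by rw [← Finset.sum_mul, hw, one_mul]

lemma root_facts (k : ℕ) (hk : 2 ≤ k) (α : ℝ) (hα : 1 < α)
    (hroot : α ^ k = ∑ i ∈ Finset.range k, α ^ i) :
    (2 - α) * α ^ k = 1 ∧ 1.6 ≤ α ∧ α < 2 ∧ 2 - α ≤ 0.4 ∧ ((k : ℝ) - 1) * (2 - α) ≤ 0.67 := by
  have h1 : (2 - α) * α ^ k = 1 := by
    have := geom_sum_mul α k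
    rw [← hroot] at this
    linarith
  have hp : 0 < α ^ k := by positivity
  have h2 : α < 2 := by
    by_contra h
    nlinarith
  obtain ⟨j, rfl⟩ := Nat.exists_eq_add_of_le' hk
  have h3 : 1.6 ≤ α := by
    have h4 : α ^ (j + 2) ≥ α ^ (j + 1) + α ^ j := by
      rw [hroot, Finset.sum_range_succ, Finset.sum_range_succ]
      have : 0 ≤ ∑ i ∈ Finset.range j, α ^ i := by positivity
      linarith
    have hj : 0 < α ^ j := by positivity
    have h5 : α ^ j * (α ^ 2 - α - 1) ≥ 0 := by
      have e1 : α ^ (j + 2) = α ^ j * α ^ 2 := by ring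
      have e2 : α ^ (j + 1) = α ^ j * α := by ring
      rw [e1, e2] at h4; linarith
    have h6 := nonneg_of_mul_nonneg_right h5 hj
    nlinarith
  have hB : 1 + (j : ℝ) * (α - 1) ≤ α ^ j := by
    have := one_add_mul_le_pow (a := α - 1) (by linarith) j
    simpa using this
  have hB2 : 1 + 0.6 * (j : ℝ) ≤ α ^ j := by
    have : (0:ℝ) ≤ j := by positivity
    nlinarith
  have hB3 : 2.56 * (1 + 0.6 * (j : ℝ)) ≤ α ^ (j + 2) := by
    rw [pow_add, mul_comm (α ^ j)]
    have : (0:ℝ) ≤ j := by positivity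
    apply mul_le_mul _ hB2 (by positivity) (by positivity)
    nlinarith
  have hj0 : (0:ℝ) ≤ j := by positivity
  have hβ : 0 < 2 - α := by linarith
  have h7 : (2 - α) * (2.56 * (1 + 0.6 * (j : ℝ))) ≤ 1 :=
    (mul_le_mul_of_nonneg_left hB3 hβ.le).trans h1.le
  refine ⟨h1, h3, h2, by linarith, ?_⟩
  push_cast
  nlinarith

lemma main_est (k : ℕ) (hk : 2 ≤ k) (α : ℝ) (hα : 1 < α)
    (hroot : α ^ k = ∑ i ∈ Finset.range k, α ^ i) (c : ℝ)
    (hc : c * (2 + ((k : ℝ) + 1) * (α - 2)) = (2 * α - 1) * (α - 1))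
    (hc1 : 1 ≤ c) (hc2 : c ≤ 5 / 2) (m : ℕ) :
    |(genLucas k m : ℝ) - c * α * (2 - α) * α ^ m| ≤ 3 / 2 := by
  obtain ⟨hb, h16, h2, h04, -⟩ := root_facts k hk α hα hroot
  have hα0 : α ≠ 0 := by positivity
  have hβ : 0 < 2 - α := by linarith
  have h3 : (α⁻¹) ^ k = 2 - α := by
    rw [inv_pow]; exact (eq_inv_of_mul_eq_one_left hb).symm
  set e : ℕ → ℝ := fun m => (genLucas k m : ℝ) - c * α * (2 - α) * α ^ m with he
  have hrec0 : ∀ m, e (m + k) = ∑ i ∈ Finset.range k, e (m + i) := by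
    intro m
    simp only [he]
    rw [genLucas_rec k m hk, Finset.sum_sub_distrib, ← Finset.mul_sum, pow_add, hroot]
    push_cast
    simp only [pow_add, Finset.mul_sum]
  have hrec : ∀ m, e (m + k + 1) = 2 * e (m + k) - e m := by
    intro m
    have h1 := hrec0 (m + 1)
    have h4 := Finset.sum_range_succ (fun i => e (m + i)) k
    rw [Finset.sum_range_succ', ← hrec0] at h4
    have h5 : ∑ i ∈ Finset.range k, e (m + 1 + i) = ∑ i ∈ Finset.range k, e (m + (i + 1)) :=
      Finset.sum_congr rfl fun i _ => by rw [show m + 1 + i = m + (i + 1) by ring]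
    rw [h5, show m + 1 + k = m + k + 1 by ring] at h1
    simp only [add_zero] at h4
    linarith
  have hw : ∑ i ∈ Finset.range k, (α⁻¹) ^ (i + 1) = 1 := by
    have := geom_sum_mul (α⁻¹) k
    rw [h3] at this
    simp only [pow_succ]
    rw [← Finset.sum_mul]
    field_simp at this ⊢
    nlinarith [mul_left_cancel₀ (show α - 1 ≠ 0 by linarith)
      (show (α - 1) * ∑ i ∈ Finset.range k, (α⁻¹) ^ i = (α - 1) * α by
        simp only [inv_pow, one_div] at this ⊢; linarith)]
  -- values on the window
  obtain ⟨j, rfl⟩ := Nat.exists_eq_add_of_le' hk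
  have g0 : ∀ i < j, genLucas (j + 2) i = 0 := fun i hi => genLucas_zero _ _ (by omega)
  have g2 : genLucas (j + 2) j = 2 := genLucas_two (j + 2)
  have g1 : genLucas (j + 2) (j + 1) = 1 := genLucas_one (j + 2) (by omega)
  have hs0 : ∑ i ∈ Finset.range j, (genLucas (j + 2) i : ℝ) = 0 :=
    Finset.sum_eq_zero fun i hi => by rw [g0 i (Finset.mem_range.1 hi)]; simp
  have hL : (genLucas (j + 2) (j + 2) : ℝ) = 3 := by
    have := genLucas_rec (j + 2) 0 hk
    simp only [zero_add] at this
    rw [this]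
    push_cast
    rw [Finset.sum_range_succ, Finset.sum_range_succ, hs0, g2, g1]
    norm_num
  have hp1 : (2 - α) * α * α ^ (j + 1) = 1 := by rw [← hb]; ring
  have hp0 : (2 - α) * α * α * α ^ j = 1 := by rw [← hb]; ring
  have h0 : e (j + 2) = ∑ i ∈ Finset.range (j + 2), (α⁻¹) ^ (i + 1) * e i := by
    have hA : ∑ i ∈ Finset.range (j + 2), (α⁻¹) ^ (i + 1) * e i
        = ∑ i ∈ Finset.range (j + 2), (α⁻¹) ^ (i + 1) * (genLucas (j + 2) i : ℝ)
          - ∑ i ∈ Finset.range (j + 2), c * (2 - α) := by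
      rw [← Finset.sum_sub_distrib]
      refine Finset.sum_congr rfl fun i _ => ?_
      simp only [he, inv_pow, pow_succ]
      field_simp
    have hz : ∑ i ∈ Finset.range j, (α⁻¹) ^ (i + 1) * (genLucas (j + 2) i : ℝ) = 0 :=
      Finset.sum_eq_zero fun i hi => by rw [g0 i (Finset.mem_range.1 hi)]; simp
    have hq : (α⁻¹) ^ (j + 1) = α * (2 - α) := by
      rw [← h3, pow_succ _ (j + 1)]; field_simp
    rw [hA, Finset.sum_range_succ, Finset.sum_range_succ, hz, g2, g1, h3, hq]
    simp only [he, hL, Finset.sum_const, Finset.card_range, nsmul_eq_mul]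
    push_cast at hc ⊢
    linear_combination (-c * α) * hb - hc
  have hB : ∀ m < j + 2, |e m| ≤ 3 / 2 := by
    intro m hm
    simp only [he]
    rcases Nat.lt_or_ge m j with h | h
    · rw [g0 m h]
      have hle : α ^ m * α ≤ α ^ j := by
        rw [← pow_succ]; exact pow_le_pow_right₀ hα.le h
      have hpos : 0 < α ^ m := by positivity
      have hx : ((2 - α) * α * α ^ m) * (α * α) ≤ 1 := by
        rw [← hp0]
        have := mul_le_mul_of_nonneg_left hle (show 0 ≤ (2 - α) * α * α by positivity)
        linarith
      have hx0 : 0 < (2 - α) * α * α ^ m := by positivity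
      have hx2 : (2 - α) * α * α ^ m ≤ 0.4 := by
        nlinarith [mul_le_mul_of_nonneg_left (show 2.56 ≤ α * α by nlinarith) hx0.le]
      rw [abs_le]
      push_cast
      constructor <;> nlinarith
    · have h' : m = j ∨ m = j + 1 := by omega
      rcases h' with rfl | rfl
      · rw [g2]
        set y := (2 - α) * α * α ^ m with hy
        have hyα : y * α = 1 := by rw [← hp0]; ring
        have hy0 : 0 < y := by positivity
        have hy1 : 1 / 2 ≤ y := by nlinarith
        have hy2 : y ≤ 1 := by nlinarith
        have hyc : c * α * (2 - α) * α ^ m = c * y := by rw [hy]; ring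
        rw [hyc, abs_le]
        push_cast
        constructor <;> nlinarith
      · rw [g1]
        have hyc : c * α * (2 - α) * α ^ (j + 1) = c := by linear_combination c * hp1
        rw [hyc, abs_le]
        push_cast
        constructor <;> linarith
  exact conv_bound _ α _ hα hw e (conv_step _ α hα hb e hrec h0) hB m

/-- The bound `|α^{-(n-1)} 10^{d1} f_k(α)^{-1} (2α-1)^{-1} ((a/9) + (b-a)10^{d2-d1}) - 1|
≤ 5/(2 α^{n-1})` on the linear form `Λ₂`. -/
theorem lambda2_bound (k n : ℕ) (hk : 2 ≤ k) (hnk : k + 1 ≤ n) (hn : 5 < n)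
    (d1 d2 : ℕ) (a b : ℤ) (hd : d2 < d1) (hd1 : 3 ≤ d1)
    (ha1 : 1 ≤ a) (ha9 : a ≤ 9) (hb0 : 0 ≤ b) (hb9 : b ≤ 9)
    (heq : lucasL k n = a * ((10 ^ d1 - 1) / 9) + (b - a) * 10 ^ d2)
    (α : ℝ) (hα : 1 < α) (hroot : α ^ k = ∑ i ∈ Finset.range k, α ^ i) :
    |(α ^ (n - 1))⁻¹ * 10 ^ d1 * ((α - 1) / (2 + ((k : ℝ) + 1) * (α - 2)))⁻¹
        * (2 * α - 1)⁻¹ * ((a : ℝ) / 9 + ((b : ℝ) - (a : ℝ)) / 10 ^ (d1 - d2)) - 1|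
      ≤ 5 / (2 * α ^ (n - 1)) := by
  obtain ⟨hb, h16, h2, h04, h067⟩ := root_facts k hk α hα hroot
  have hβ : 0 < 2 - α := by linarith
  have hkβ : 0 ≤ ((k : ℝ) - 2) * (2 - α) := by
    have : (2 : ℝ) ≤ k := by exact_mod_cast hk
    exact mul_nonneg (by linarith) hβ.le
  have hden : 0 < 2 + ((k : ℝ) + 1) * (α - 2) := by nlinarith
  obtain ⟨c, hcdef⟩ : ∃ c, c = (2 * α - 1) * ((α - 1) / (2 + ((k : ℝ) + 1) * (α - 2))) :=
    ⟨_, rfl⟩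
  have hc : c * (2 + ((k : ℝ) + 1) * (α - 2)) = (2 * α - 1) * (α - 1) := by
    rw [hcdef]; field_simp
  have hc1 : 1 ≤ c := by
    rw [hcdef, ← mul_div_assoc, le_div_iff₀ hden]
    nlinarith
  have hc2 : c ≤ 5 / 2 := by
    rw [hcdef, ← mul_div_assoc, div_le_iff₀ hden]
    nlinarith
  have hest := main_est k hk α hα hroot c hc hc1 hc2 (n + k - 2)
  have hP : 0 < α ^ (n - 1) := by positivity
  have hpow : c * α * (2 - α) * α ^ (n + k - 2) = c * α ^ (n - 1) := by
    obtain ⟨t, rfl⟩ : ∃ t, n = t + 2 := ⟨n - 2, by omega⟩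
    rw [show t + 2 + k - 2 = t + k by omega, show t + 2 - 1 = t + 1 by omega]
    rw [pow_add, pow_succ]
    linear_combination (c * α * α ^ t) * hb
  rw [hpow] at hest
  have hL : (genLucas k (n + k - 2) : ℝ)
      = a * ((10 ^ d1 - 1) / 9) + (b - a) * 10 ^ d2 := by
    have hdvd : (9 : ℤ) ∣ 10 ^ d1 - 1 := by
      simpa using sub_dvd_pow_sub_pow (10 : ℤ) 1 d1
    have := congrArg (Int.cast : ℤ → ℝ) heq
    rw [lucasL] at this
    push_cast [Int.cast_div hdvd (by norm_num : ((9 : ℤ) : ℝ) ≠ 0)] at this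
    exact this
  have hE : (10 : ℝ) ^ d1 * ((a : ℝ) / 9 + ((b : ℝ) - (a : ℝ)) / 10 ^ (d1 - d2))
      = genLucas k (n + k - 2) + a / 9 := by
    rw [hL]
    have h10 : (10 : ℝ) ^ d1 = 10 ^ d2 * 10 ^ (d1 - d2) := by
      rw [← pow_add]; congr 1; omega
    rw [h10]
    field_simp
    ring
  have hcne : c ≠ 0 := by positivity
  have hX : (α ^ (n - 1))⁻¹ * 10 ^ d1 * ((α - 1) / (2 + ((k : ℝ) + 1) * (α - 2)))⁻¹
        * (2 * α - 1)⁻¹ * ((a : ℝ) / 9 + ((b : ℝ) - (a : ℝ)) / 10 ^ (d1 - d2)) - 1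
      = ((genLucas k (n + k - 2) - c * α ^ (n - 1)) + a / 9) / (c * α ^ (n - 1)) := by
    have hci : c⁻¹ = ((α - 1) / (2 + ((k : ℝ) + 1) * (α - 2)))⁻¹ * (2 * α - 1)⁻¹ := by
      rw [hcdef, mul_inv, mul_comm]
    calc _ = (α ^ (n - 1))⁻¹ * c⁻¹ *
          (10 ^ d1 * ((a : ℝ) / 9 + ((b : ℝ) - (a : ℝ)) / 10 ^ (d1 - d2))) - 1 := by
          rw [hci]; ring
      _ = _ := by
          rw [hE]; field_simp; ring
  rw [hX, abs_div, abs_of_pos (show 0 < c * α ^ (n - 1) by positivity),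
    div_le_div_iff₀ (by positivity) (by positivity)]
  have ha1' : (1 : ℝ) ≤ a := by exact_mod_cast ha1
  have ha9' : (a : ℝ) ≤ 9 := by exact_mod_cast ha9
  have hnum : |((genLucas k (n + k - 2) : ℝ) - c * α ^ (n - 1)) + a / 9| ≤ 5 / 2 := by
    rw [abs_le] at hest ⊢
    constructor <;> linarith
  have hcP : α ^ (n - 1) ≤ c * α ^ (n - 1) := le_mul_of_one_le_left hP.le hc1
  nlinarith
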